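/- Let G be a countable group acting on a countable tree T such that the orbit equivalence relation E_G^{Geo(T)} of G acting on the space of infinite geodesics is smooth. Then E_G^{∂T} is Borel bireducible with E_{G×ℕ}^{Geo(T)}, which is Borel bireducible with the equivalence relation E_ℕ^{Geo(T)/G} induced by the shift on the quotient Geo(T)/G; the latter is Borel hyperfinite, and hence E_G^{∂T} is Borel hyperfinite. -/

import Mathlib

open MeasureTheory Function Filter

/-! ### Countable Borel equivalence relations -/

section CBER

variable {X Y : Type*} [MeasurableSpace X] [MeasurableSpace Y]

/-- A countable Borel equivalence relation on a standard Borel space. -/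
def IsCBER (E : X → X → Prop) : Prop :=
  Equivalence E ∧ MeasurableSet {p : X × X | E p.1 p.2} ∧ ∀ x : X, {y | E x y}.Countable

/-- `B` meets every `E`-class in exactly one point. -/
def IsTransversal (E : X → X → Prop) (B : Set X) : Prop :=
  ∀ x : X, ∃! y : X, y ∈ B ∧ E x y

/-- A CBER is smooth if it admits a Borel transversal. -/
def SmoothRel (E : X → X → Prop) : Prop :=
  ∃ B : Set X, MeasurableSet B ∧ IsTransversal E B

/-- A Borel equivalence relation all of whose classes are finite. -/
def IsFiniteBorelEquivalence (E : X → X → Prop) : Prop :=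
  Equivalence E ∧ MeasurableSet {p : X × X | E p.1 p.2} ∧ ∀ x : X, {y | E x y}.Finite

/-- A CBER is (Borel) hyperfinite if it is the increasing union of a sequence of
Borel equivalence relations with finite classes. -/
def Hyperfinite (E : X → X → Prop) : Prop :=
  ∃ F : ℕ → X → X → Prop,
    (∀ i, IsFiniteBorelEquivalence (F i)) ∧
    (∀ i x y, F i x y → F (i + 1) x y) ∧
    (∀ x y, E x y ↔ ∃ i, F i x y)

/-- Borel reducibility of equivalence relations. -/
def BorelReducible (E : X → X → Prop) (F : Y → Y → Prop) : Prop :=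
  ∃ f : X → Y, Measurable f ∧ ∀ x x' : X, E x x' ↔ F (f x) (f x')

/-- Borel bireducibility of equivalence relations. -/
def BorelBireducible (E : X → X → Prop) (F : Y → Y → Prop) : Prop :=
  BorelReducible E F ∧ BorelReducible F E

/-- The saturation `[A]_E` of a set `A`: the smallest `E`-invariant set containing `A`. -/
def Saturation (E : X → X → Prop) (A : Set X) : Set X :=
  {x : X | ∃ a ∈ A, E x a}

end CBER

/-! ### ℓ¹ machinery, amenability of CBERs -/

section Amen

variable {X : Type*} [MeasurableSpace X]

/-- ℓ¹ distance between two summable functions. -/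
noncomputable def l1dist {A : Type*} (p q : A → ℝ) : ℝ :=
  ∑' a : A, |p a - q a|

/-- `p` is a probability measure concentrated on the `E`-class of `x`
(identified with its density). -/
def IsProbOnClass (E : X → X → Prop) (p : X → ℝ) (x : X) : Prop :=
  (∀ y, 0 ≤ p y) ∧ (∀ y, p y ≠ 0 → E x y) ∧ HasSum p 1

/-- A CBER is Borel amenable if there is a sequence of Borel assignments of probability
measures on the classes which are asymptotically invariant. -/
def BorelAmenable (E : X → X → Prop) : Prop :=
  ∃ p : ℕ → X → X → ℝ,
    (∀ i x, IsProbOnClass E (p i x) x) ∧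
    (∀ i, Measurable fun q : X × X => p i q.1 q.2) ∧
    (∀ x y, E x y → ∀ ε : ℝ, 0 < ε → ∀ᶠ i in atTop, l1dist (p i x) (p i y) < ε)

/-- A CBER is Borel 2-amenable if there is a double sequence of Borel assignments of
probability measures on the classes which are asymptotically invariant in the
iterated-limit sense. -/
def Borel2Amenable (E : X → X → Prop) : Prop :=
  ∃ p : ℕ → ℕ → X → X → ℝ,
    (∀ i j x, IsProbOnClass E (p i j x) x) ∧
    (∀ i j, Measurable fun q : X × X => p i j q.1 q.2) ∧
    (∀ x y, E x y → ∀ ε : ℝ, 0 < ε →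
      ∀ᶠ i in atTop, ∀ᶠ j in atTop, l1dist (p i j x) (p i j y) < ε)

/-- `E` is μ-hyperfinite: hyperfinite off a μ-null set. -/
def MuHyperfinite (E : X → X → Prop) (μ : Measure X) : Prop :=
  ∃ A : Set X, MeasurableSet A ∧ μ Aᶜ = 0 ∧ Hyperfinite (fun a b : A => E a b)

/-- `E` is μ-amenable: Borel amenable off a μ-null set. -/
def MuAmenable (E : X → X → Prop) (μ : Measure X) : Prop :=
  ∃ A : Set X, MeasurableSet A ∧ μ Aᶜ = 0 ∧ BorelAmenable (fun a b : A => E a b)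

/-- `E` is μ-2-amenable: Borel 2-amenable off a μ-null set. -/
def Mu2Amenable (E : X → X → Prop) (μ : Measure X) : Prop :=
  ∃ A : Set X, MeasurableSet A ∧ μ Aᶜ = 0 ∧ Borel2Amenable (fun a b : A => E a b)

/-- `E` is measure-hyperfinite: μ-hyperfinite for every Borel probability measure μ. -/
def MeasureHyperfinite (E : X → X → Prop) : Prop :=
  ∀ μ : Measure X, IsProbabilityMeasure μ → MuHyperfinite E μ

end Amen

/-! ### Reiter functions and uniform coamenability -/

section Reiter

/-- A (finitely or infinitely supported) probability function on a countable set. -/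
def IsProbFun {A : Type*} (p : A → ℝ) : Prop :=
  (∀ a, 0 ≤ p a) ∧ HasSum p 1

/-- The pushforward of `p : Prob(G)` under the orbit map `g ↦ g • x`. -/
noncomputable def pushMeasure {G X : Type*} [Group G] [MulAction G X]
    (p : G → ℝ) (x : X) : X → ℝ :=
  fun y => ∑' g : {g : G // g • x = y}, p g.1

/-- `p` is an `(S, ε)`-Reiter function for the action `G ↷ X`. -/
def IsReiterFun {G : Type*} (X : Type*) [Group G] [MulAction G X]
    (S : Finset G) (ε : ℝ) (p : G → ℝ) : Prop :=
  IsProbFun p ∧ ∀ s ∈ S, ∀ x : X, l1dist (pushMeasure p x) (pushMeasure p (s • x)) < ε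

/-- A subgroup `H ≤ G` is uniformly coamenable if the action `G ↷ G/H` admits
`(S, ε)`-Reiter functions for all finite `S ⊆ G` and all `ε > 0`. -/
def UniformlyCoamenable {G : Type*} [Group G] (H : Subgroup G) : Prop :=
  ∀ (S : Finset G) (ε : ℝ), 0 < ε → ∃ p : G → ℝ, IsReiterFun (G ⧸ H) S ε p

/-- The Reiter criterion for amenability of a countable group `Q`. -/
def ReiterAmenable (Q : Type*) [Group Q] : Prop :=
  ∀ (S : Finset Q) (ε : ℝ), 0 < ε → ∃ q : Q → ℝ, IsProbFun q ∧
    ∀ s ∈ S, l1dist q (fun x => q (s⁻¹ * x)) < ε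

end Reiter

/-! ### Trees, geodesics and the Gromov boundary -/

section Tree

variable {V : Type*} (T : SimpleGraph V)

/-- The space of infinite geodesics in the graph `T`. -/
def Geo : Set (ℕ → V) :=
  {v | Function.Injective v ∧ ∀ n, T.Adj (v n) (v (n + 1))}

/-- The shift map (the action of the generator of the monoid ℕ) on `Geo T`. -/
def geoShift (v : Geo T) : Geo T :=
  ⟨fun n => v.1 (n + 1),
   fun a b h => by have := v.2.1 h; omega,
   fun n => v.2.2 (n + 1)⟩

/-- Tail equivalence: the orbit equivalence relation of the shift action of the
monoid ℕ on `Geo T`, i.e. the equivalence relation generated by `v ∼ m • v`. -/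
def tailRel : Geo T → Geo T → Prop :=
  Relation.EqvGen fun a b => ∃ m : ℕ, b = (geoShift T)^[m] a

def tailSetoid : Setoid (Geo T) :=
  ⟨tailRel T, Relation.EqvGen.is_equivalence _⟩

/-- The Gromov boundary `∂T = Geo(T)/ℕ`. -/
def Bdry : Type _ := Quotient (tailSetoid T)

instance [MeasurableSpace V] : MeasurableSpace (Bdry T) :=
  inferInstanceAs (MeasurableSpace (Quotient (tailSetoid T)))

variable {G : Type*} [Group G] [MulAction G V]

/-- The action `G ↷ V` is by graph automorphisms of `T`. -/
def IsGraphAction (G : Type*) [Group G] [MulAction G V] : Prop :=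
  ∀ (g : G) (v w : V), T.Adj v w ↔ T.Adj (g • v) (g • w)

variable {T}

/-- The coordinatewise action of `G` on `Geo T`. -/
def geoSmul (h : IsGraphAction T G) (g : G) (v : Geo T) : Geo T :=
  ⟨fun n => g • v.1 n, (MulAction.injective g).comp v.2.1,
   fun n => (h g _ _).mp (v.2.2 n)⟩

lemma geoShift_geoSmul (h : IsGraphAction T G) (g : G) (v : Geo T) :
    geoShift T (geoSmul h g v) = geoSmul h g (geoShift T v) := rfl

lemma iterate_geoShift_geoSmul (h : IsGraphAction T G) (g : G) (m : ℕ) (v : Geo T) :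
    (geoShift T)^[m] (geoSmul h g v) = geoSmul h g ((geoShift T)^[m] v) := by
  induction m generalizing v with
  | zero => rfl
  | succ m ih =>
      rw [Function.iterate_succ_apply, Function.iterate_succ_apply,
        geoShift_geoSmul, ih]

lemma tailRel_geoSmul (h : IsGraphAction T G) (g : G) {v w : Geo T}
    (hvw : tailRel T v w) : tailRel T (geoSmul h g v) (geoSmul h g w) := by
  induction hvw with
  | rel a b hab =>
      obtain ⟨m, rfl⟩ := hab
      exact Relation.EqvGen.rel _ _ ⟨m, (iterate_geoShift_geoSmul h g m a).symm⟩
  | refl a => exact Relation.EqvGen.refl _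
  | symm a b _ ih => exact Relation.EqvGen.symm _ _ ih
  | trans a b c _ _ ih1 ih2 => exact Relation.EqvGen.trans _ _ _ ih1 ih2

/-- The induced action of `G` on the Gromov boundary `∂T`. -/
def bdrySmul (h : IsGraphAction T G) (g : G) : Bdry T → Bdry T :=
  Quotient.map (geoSmul h g) (fun _ _ hab => tailRel_geoSmul h g hab)

/-- The orbit equivalence relation `E_G^{∂T}` of the boundary action. -/
def bdryRel (h : IsGraphAction T G) : Bdry T → Bdry T → Prop :=
  fun x y => ∃ g : G, bdrySmul h g x = y

/-- The orbit equivalence relation `E_G^{Geo(T)}`. -/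
def geoRel (h : IsGraphAction T G) : Geo T → Geo T → Prop :=
  fun v w => ∃ g : G, geoSmul h g v = w

end Tree

/-! ### Stabilizers of geodesics and of their initial segments -/

section Stab

variable (G : Type*) {V : Type*} [Group G] [MulAction G V]

/-- The (pointwise) stabilizer of an infinite sequence of vertices. -/
def ptwiseStab (v : ℕ → V) : Subgroup G where
  carrier := {g : G | ∀ k : ℕ, g • v k = v k}
  one_mem' := fun k => one_smul _ _
  mul_mem' := fun {a b} ha hb k => by rw [mul_smul, hb k, ha k]
  inv_mem' := fun {a} ha k => inv_smul_eq_iff.mpr (ha k).symm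

/-- The stabilizer of the initial segment `(v 0, …, v n)`. -/
def initStab (v : ℕ → V) (n : ℕ) : Subgroup G where
  carrier := {g : G | ∀ k ≤ n, g • v k = v k}
  one_mem' := fun k _ => one_smul _ _
  mul_mem' := fun {a b} ha hb k hk => by rw [mul_smul, hb k hk, ha k hk]
  inv_mem' := fun {a} ha k hk => inv_smul_eq_iff.mpr (ha k hk).symm

/-- The stabilizer of a finite geodesic given as a tuple of vertices. -/
def finStab {n : ℕ} (f : Fin n → V) : Subgroup G where
  carrier := {g : G | ∀ i : Fin n, g • f i = f i}
  one_mem' := fun i => one_smul _ _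
  mul_mem' := fun {a b} ha hb i => by rw [mul_smul, hb i, ha i]
  inv_mem' := fun {a} ha i => inv_smul_eq_iff.mpr (ha i).symm

end Stab

/-! ### Orbit equivalence relations of monoid actions -/

section MonoidOrbit

/-- The orbit equivalence relation of a monoid action: the equivalence relation
generated by `x ∼ m • x`. -/
def monOrbitRel (M : Type*) {X : Type*} [Monoid M] [MulAction M X] :
    X → X → Prop :=
  Relation.EqvGen fun x y => ∃ m : M, y = m • x

end MonoidOrbit

/-! ### STATEMENT 14 -/

section Stmt14

variable {V : Type*} {T : SimpleGraph V} {G : Type*} [Group G] [MulAction G V]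

lemma geoSmul_one (hact : IsGraphAction T G) (v : Geo T) :
    geoSmul hact (1 : G) v = v :=
  Subtype.ext (funext fun n => one_smul G (v.1 n))

lemma geoSmul_mul (hact : IsGraphAction T G) (a b : G) (v : Geo T) :
    geoSmul hact (a * b) v = geoSmul hact a (geoSmul hact b v) :=
  Subtype.ext (funext fun n => mul_smul a b (v.1 n))

/-- The `G`-orbit setoid on `Geo T`. -/
def geoSetoidG (hact : IsGraphAction T G) : Setoid (Geo T) :=
  ⟨geoRel hact,
    ⟨fun v => ⟨1, geoSmul_one hact v⟩,
     fun {v w} h => by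
        obtain ⟨g, rfl⟩ := h
        exact ⟨g⁻¹, by rw [← geoSmul_mul, inv_mul_cancel, geoSmul_one]⟩,
     fun {u v w} h1 h2 => by
        obtain ⟨g, rfl⟩ := h1
        obtain ⟨g', rfl⟩ := h2
        exact ⟨g' * g, geoSmul_mul hact g' g u⟩⟩⟩

/-- The quotient space `Geo(T)/G`. -/
abbrev GeoQuotG (hact : IsGraphAction T G) : Type _ :=
  Quotient (geoSetoidG hact)

/-- The shift descends to the quotient `Geo(T)/G`. -/
def shiftQuotG (hact : IsGraphAction T G) : GeoQuotG hact → GeoQuotG hact :=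
  Quotient.map (geoShift T)
    (fun a b h => by
      obtain ⟨g, rfl⟩ := h
      exact ⟨g, (geoShift_geoSmul hact g a).symm⟩)

/-- The equivalence relation `E_ℕ^{Geo(T)/G}` induced by the shift on `Geo(T)/G`. -/
def shiftQuotRel (hact : IsGraphAction T G) : GeoQuotG hact → GeoQuotG hact → Prop :=
  Relation.EqvGen fun x y => ∃ m : ℕ, y = (shiftQuotG hact)^[m] x

/-- The orbit equivalence relation `E_{G×ℕ}^{Geo(T)}` of the commuting actions of `G`
and of the shift monoid ℕ. -/
def geoRelGN (hact : IsGraphAction T G) : Geo T → Geo T → Prop :=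
  Relation.EqvGen fun v w => ∃ q : G × ℕ, w = geoSmul hact q.1 ((geoShift T)^[q.2] v)

end Stmt14

/-- Equality-or-both-small relation on `ℕ`. -/
def nearRel (n a b : ℕ) : Prop := a = b ∨ (a ≤ n ∧ b ≤ n)

lemma nearRel_mono {n a b : ℕ} (h : nearRel n a b) : nearRel (n + 1) a b := by
  unfold nearRel at *; omega

lemma nearRel_finite (n a : ℕ) : {b | nearRel n a b}.Finite := by
  apply (Set.finite_Iic (max a n)).subset
  intro b hb
  simp only [Set.mem_ofPred_eq, nearRel, Set.mem_Iic] at *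
  omega

/-- Coded hypersmooth relations are hyperfinite. -/
lemma hyperfinite_of_codes {X : Type*} [MeasurableSpace X] (E : X → X → Prop)
    (h : X → ℝ) (hh : Measurable h) (hinj : Function.Injective h)
    (s : ℕ → X → X) (hs : ∀ n, Measurable (s n)) (hs0 : ∀ x, s 0 x = x)
    (hs1 : ∀ n x y, s n x = s n y → s (n + 1) x = s (n + 1) y)
    (c : ℕ → X → ℕ) (hc : ∀ n, Measurable (c n))
    (hsc : ∀ n x y, s (n + 1) x = s (n + 1) y → c n (s n x) = c n (s n y) → s n x = s n y)
    (hE : ∀ x y, E x y ↔ ∃ n, s n x = s n y) : Hyperfinite E := by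
  have hmono : ∀ x y n k, s n x = s n y → s (n + k) x = s (n + k) y := by
    intro x y n k hxy
    induction k with
    | zero => exact hxy
    | succ k ih => exact hs1 _ _ _ ih
  refine ⟨fun n x y => s n x = s n y ∧ ∀ i < n, nearRel n (c i (s i x)) (c i (s i y)),
    ?_, ?_, ?_⟩
  · intro n
    refine ⟨⟨?_, ?_, ?_⟩, ?_, ?_⟩
    · exact fun x => ⟨rfl, fun i _ => Or.inl rfl⟩
    · rintro x y ⟨h1, h2⟩
      refine ⟨h1.symm, fun i hi => ?_⟩
      have := h2 i hi
      unfold nearRel at *; omega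
    · rintro x y z ⟨h1, h2⟩ ⟨h3, h4⟩
      refine ⟨h1.trans h3, fun i hi => ?_⟩
      have := h2 i hi
      have := h4 i hi
      unfold nearRel at *; omega
    · have e : {p : X × X | s n p.1 = s n p.2 ∧
          ∀ i < n, nearRel n (c i (s i p.1)) (c i (s i p.2))} =
          {p : X × X | h (s n p.1) = h (s n p.2)} ∩
          ⋂ i : ℕ, ⋂ _ : i < n, (fun p : X × X => (c i (s i p.1), c i (s i p.2))) ⁻¹'
            {q | nearRel n q.1 q.2} := by
        ext p
        simp [hinj.eq_iff]
      rw [e]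
      refine MeasurableSet.inter (measurableSet_eq_fun ?_ ?_) ?_
      · exact hh.comp ((hs n).comp measurable_fst)
      · exact hh.comp ((hs n).comp measurable_snd)
      · refine MeasurableSet.iInter fun i => MeasurableSet.iInter fun _ => ?_
        refine Measurable.prodMk ?_ ?_ (MeasurableSet.of_discrete)
        · exact (hc i).comp ((hs i).comp measurable_fst)
        · exact (hc i).comp ((hs i).comp measurable_snd)
    · intro x
      have hfin : (Set.pi Set.univ (fun i : Fin n => {b | nearRel n (c i (s i x)) b})).Finite :=
        Set.Finite.pi' (fun i => nearRel_finite _ _) |>.subset (fun f hf i => hf i trivial)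
      refine Set.Finite.of_finite_image (f := fun y (i : Fin n) => c i (s i y))
        (hfin.subset ?_) ?_
      · rintro _ ⟨y, hy, rfl⟩ i _
        exact hy.2 i i.2
      · intro y hy z hz hyz
        have hyz' : ∀ i < n, c i (s i y) = c i (s i z) := fun i hi => congrFun hyz ⟨i, hi⟩
        have hn : s n y = s n z := hy.1.symm.trans hz.1
        have : ∀ k ≤ n, s (n - k) y = s (n - k) z := by
          intro k
          induction k with
          | zero => intro _; exact hn
          | succ k ih =>
            intro hk
            have e : n - k = (n - (k + 1)) + 1 := by omega
            have := ih (by omega)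
            rw [e] at this
            exact hsc _ _ _ this (hyz' _ (by omega))
        have := this n le_rfl
        rwa [Nat.sub_self, hs0, hs0] at this
  · rintro i x y ⟨h1, h2⟩
    refine ⟨hs1 _ _ _ h1, fun j hj => ?_⟩
    rcases Nat.lt_succ_iff_lt_or_eq.mp hj with hj | rfl
    · exact nearRel_mono (h2 j hj)
    · exact Or.inl (by rw [h1])
  · intro x y
    rw [hE]
    constructor
    · rintro ⟨n, hn⟩
      let M := ∑ i ∈ Finset.range n, (c i (s i x) + c i (s i y))
      refine ⟨n + M, hmono _ _ _ _ hn, fun i hi => ?_⟩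
      by_cases hin : i < n
      · right
        have : c i (s i x) + c i (s i y) ≤ M :=
          Finset.single_le_sum (f := fun i => c i (s i x) + c i (s i y))
            (fun _ _ => Nat.zero_le _) (Finset.mem_range.2 hin)
        omega
      · left
        have := hmono x y n (i - n) hn
        rw [Nat.add_sub_cancel' (by omega)] at this
        rw [this]
    · rintro ⟨n, hn, -⟩
      exact ⟨n, hn⟩

/-- Code of the path `x, f x, …, f^k x`. -/
def pathCode {X : Type*} (f : X → X) (N : X → ℕ) : ℕ → X → ℕ
  | 0, _ => 0
  | k + 1, x => Nat.pair (N x) (pathCode f N k (f x))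

lemma measurable_pathCode {X : Type*} [MeasurableSpace X] {f : X → X} {N : X → ℕ}
    (hf : Measurable f) (hN : Measurable N) (k : ℕ) : Measurable (pathCode f N k) := by
  induction k with
  | zero => exact measurable_const
  | succ k ih =>
    have : Measurable (fun p : ℕ × ℕ => Nat.pair p.1 p.2) := Measurable.of_discrete
    exact this.comp (hN.prodMk (ih.comp hf))

lemma pathCode_inj {X : Type*} {f : X → X} {N : X → ℕ}
    (hfN : ∀ x y, f x = f y → N x = N y → x = y) (k : ℕ) :
    ∀ x y, f^[k] x = f^[k] y → pathCode f N k x = pathCode f N k y → x = y := by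
  induction k with
  | zero => intro x y h _; exact h
  | succ k ih =>
    intro x y h1 h2
    rw [Function.iterate_succ_apply, Function.iterate_succ_apply] at h1
    simp only [pathCode, Nat.pair_eq_pair] at h2
    exact hfN _ _ (ih _ _ h1 h2.2) h2.1

/-- Given a decreasing sequence of recurrent Borel sets such that first hitting points eventually
merge on tail classes, the tail relation is hyperfinite. -/
lemma hyperfinite_of_markers {X : Type*} [MeasurableSpace X]
    (h : X → ℝ) (hh : Measurable h) (hinj : Function.Injective h)
    (f : X → X) (hf : Measurable f) (N : X → ℕ) (hN : Measurable N)
    (hfN : ∀ x y, f x = f y → N x = N y → x = y)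
    (S : ℕ → Set X) (hS : ∀ n, MeasurableSet (S n)) (hSdec : ∀ n, S (n + 1) ⊆ S n)
    (hrec : ∀ n x, ∃ k, f^[k] x ∈ S n)
    (hmerge : ∀ x y m k, f^[m] x = f^[k] y → 
      (∃ n, (∀ i < m, f^[i] x ∉ S n) ∧ (∀ i < k, f^[i] y ∉ S n)) ∨
      (∃ n, ∀ i j, f^[i] x ∈ S n → f^[j] y ∈ S n → f^[i] x = f^[j] y)) :
    Hyperfinite (fun x y => ∃ m n, f^[m] x = f^[n] y) := by
  classical
  let φ : ℕ → X → X := fun n x => f^[Nat.find (hrec n x)] x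
  have hφ : ∀ n, Measurable (φ n) := fun n =>
    Measurable.find (f := fun k x => f^[k] x) (fun k => hf.iterate k)
      (fun k => (hf.iterate k) (hS n)) (hrec n)
  let C : ℕ → X → ℕ := fun n x =>
    Nat.pair (Nat.find (hrec n x)) (pathCode f N (Nat.find (hrec n x)) x)
  have hC : ∀ n, Measurable (C n) := fun n => by
    refine Measurable.find (f := fun k x => Nat.pair k (pathCode f N k x)) (fun k => ?_)
      (fun k => (hf.iterate k) (hS n)) (hrec n)
    exact (Measurable.of_discrete (f := Nat.pair k)).comp (measurable_pathCode hf hN k)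
  have hφS : ∀ n x, φ n x ∈ S n := fun n x => Nat.find_spec (hrec n x)
  -- skipping points outside `S n`
  have hskip : ∀ n m x, (∀ i < m, f^[i] x ∉ S n) → φ n (f^[m] x) = φ n x := by
    intro n m x hx
    have hle : m ≤ Nat.find (hrec n x) := by
      by_contra hlt
      exact hx _ (not_le.mp hlt) (Nat.find_spec (hrec n x))
    have e : Nat.find (hrec n x) = Nat.find (hrec n (f^[m] x)) + m := by
      rw [Nat.find_eq_iff]
      constructor
      · rw [Function.iterate_add_apply]; exact Nat.find_spec (hrec n (f^[m] x))
      · intro j hj hjS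
        by_cases hjm : j < m
        · exact hx j hjm hjS
        · refine Nat.find_min (hrec n (f^[m] x)) (m := j - m) (by omega) ?_
          rw [← Function.iterate_add_apply, Nat.sub_add_cancel (by omega)]
          exact hjS
    change f^[Nat.find (hrec n (f^[m] x))] (f^[m] x) = f^[Nat.find (hrec n x)] x
    rw [e, Function.iterate_add_apply]
  have hφφ : ∀ n x, φ (n + 1) (φ n x) = φ (n + 1) x := fun n x =>
    hskip (n + 1) _ x fun i hi hiS => Nat.find_min (hrec n x) hi (hSdec n hiS)
  have hCinj : ∀ n x y, φ n x = φ n y → C n x = C n y → x = y := by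
    intro n x y h1 h2
    simp only [C, Nat.pair_eq_pair] at h2
    obtain ⟨h2, h3⟩ := h2
    simp only [φ] at h1
    rw [h2] at h1 h3
    exact pathCode_inj hfN _ _ _ h1 h3
  refine hyperfinite_of_codes _ h hh hinj (fun n => Nat.casesOn n id φ) ?_ (fun _ => rfl) ?_
    C hC ?_ ?_
  · rintro (_ | n)
    · exact measurable_id
    · exact hφ n
  · rintro (_ | n) x y hxy
    · exact congrArg (φ 0) hxy
    · change φ (n + 1) x = φ (n + 1) y
      rw [← hφφ n x, ← hφφ n y]
      exact congrArg (φ (n + 1)) hxy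
  · rintro (_ | n) x y h1 h2
    · exact hCinj 0 _ _ h1 h2
    · refine hCinj (n + 1) _ _ ?_ h2
      change φ (n + 1) (φ n x) = φ (n + 1) (φ n y)
      rw [hφφ, hφφ]
      exact h1
  · intro x y
    constructor
    · rintro ⟨m, k, hmk⟩
      rcases hmerge x y m k hmk with ⟨n, h1, h2⟩ | ⟨n, hn⟩
      · refine ⟨n + 1, ?_⟩
        change φ n x = φ n y
        rw [← hskip n m x h1, ← hskip n k y h2, hmk]
      · exact ⟨n + 1, hn _ _ (hφS n x) (hφS n y)⟩
    · rintro ⟨_ | n, hn⟩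
      · exact ⟨0, 0, hn⟩
      · exact ⟨_, _, hn⟩

/-- Dougherty–Jackson–Kechris: the tail equivalence relation of a countable-to-one Borel map is
hyperfinite. -/
lemma hyperfinite_tail {X : Type*} [MeasurableSpace X]
    (h : X → ℝ) (hh : Measurable h) (hinj : Function.Injective h)
    (h0 : ∀ x, 0 ≤ h x) (h1 : ∀ x, h x ≤ 1)
    (f : X → X) (hf : Measurable f) (N : X → ℕ) (hN : Measurable N)
    (hfN : ∀ x y, f x = f y → N x = N y → x = y) :
    Hyperfinite (fun x y => ∃ m n, f^[m] x = f^[n] y) := by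
  let L : X → ℝ := fun x => liminf (fun i => h (f^[i] x)) atTop
  have hL : Measurable L := Measurable.liminf fun i => hh.comp (hf.iterate i)
  have hLf1 : ∀ x, L (f x) = L x := fun x => by
    have := Filter.liminf_nat_add (fun i => h (f^[i] x)) 1
    simpa only [L, Function.iterate_succ_apply] using this
  have hLf : ∀ k x, L (f^[k] x) = L x := by
    intro k
    induction k with
    | zero => intro x; rfl
    | succ k ih => intro x; rw [Function.iterate_succ_apply, ih, hLf1]
  have hbd : ∀ x, IsBoundedUnder (· ≥ ·) atTop (fun i => h (f^[i] x)) := fun x =>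
    isBoundedUnder_of ⟨0, fun i => h0 _⟩
  have hcbd : ∀ x, IsCoboundedUnder (· ≥ ·) atTop (fun i => h (f^[i] x)) := fun x =>
    (isBoundedUnder_of ⟨1, fun i => h1 _⟩ : 
      IsBoundedUnder (· ≤ ·) atTop (fun i => h (f^[i] x))).isCoboundedUnder_ge
  have hclose : ∀ x (ε : ℝ), 0 < ε → ∃ᶠ i in atTop, |h (f^[i] x) - L x| < ε := by
    intro x ε hε
    have a := Filter.frequently_lt_of_liminf_lt (hcbd x) (show L x < L x + ε by linarith)
    have b := Filter.eventually_lt_of_lt_liminf (show L x - ε < L x by linarith) (hbd x)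
    refine (a.and_eventually b).mono fun i hi => ?_
    rw [abs_lt]; constructor <;> linarith [hi.1, hi.2]
  let D : Set X := {x | ∃ᶠ i in atTop, h (f^[i] x) = L x}
  have hDm : MeasurableSet D := by
    have : D = ⋂ a : ℕ, ⋃ b : ℕ, ⋃ _ : a ≤ b, {x | h (f^[b] x) = L x} := by
      ext x
      simp [D, Filter.frequently_atTop]
    rw [this]
    exact MeasurableSet.iInter fun a => MeasurableSet.iUnion fun b => MeasurableSet.iUnion fun _ =>
      measurableSet_eq_fun (hh.comp (hf.iterate b)) hL
  have hDf : ∀ k x, f^[k] x ∈ D ↔ x ∈ D := by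
    intro k x
    simp only [D, Set.mem_ofPred_eq, hLf, ← Function.iterate_add_apply]
    constructor
    · intro H
      rw [Filter.frequently_atTop] at H ⊢
      intro a
      obtain ⟨b, hb, e⟩ := H a
      exact ⟨b + k, by omega, e⟩
    · intro H
      rw [Filter.frequently_atTop] at H ⊢
      intro a
      obtain ⟨b, hb, e⟩ := H (a + k)
      exact ⟨b - k, by omega, by rwa [Nat.sub_add_cancel (by omega)]⟩
  let S : ℕ → Set X := fun n => {x | (x ∈ D ∧ h x = L x) ∨
    (x ∉ D ∧ h x ≠ L x ∧ |h x - L x| < 1 / ((n : ℝ) + 1))}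
  have hSm : ∀ n, MeasurableSet (S n) := fun n => by
    have e1 : MeasurableSet {x | h x = L x} := measurableSet_eq_fun hh hL
    have e2 : MeasurableSet {x | |h x - L x| < 1 / ((n : ℝ) + 1)} :=
      measurableSet_lt (by simpa [Real.norm_eq_abs] using (hh.sub hL).norm) measurable_const
    exact (hDm.inter e1).union (hDm.compl.inter (e1.compl.inter e2))
  refine hyperfinite_of_markers h hh hinj f hf N hN hfN S hSm ?_ ?_ ?_
  · intro n x hx
    rcases hx with hx | ⟨h1, h2, h3⟩
    · exact Or.inl hx
    · refine Or.inr ⟨h1, h2, h3.trans_le ?_⟩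
      push_cast
      apply one_div_le_one_div_of_le <;> [positivity; linarith]
  · intro n x
    by_cases hx : x ∈ D
    · obtain ⟨i, hi⟩ := Filter.Frequently.exists (show ∃ᶠ i in atTop, h (f^[i] x) = L x from hx)
      exact ⟨i, Or.inl ⟨(hDf i x).2 hx, by rw [hLf]; exact hi⟩⟩
    · have hx' : ∀ᶠ i in atTop, ¬ h (f^[i] x) = L x := Filter.not_frequently.mp hx
      obtain ⟨i, hi1, hi2⟩ := ((hclose x (1 / ((n : ℝ) + 1)) (by positivity)).and_eventually
        hx').exists
      exact ⟨i, Or.inr ⟨fun H => hx ((hDf i x).1 H), by rw [hLf]; exact hi2,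
        by rw [hLf]; exact hi1⟩⟩
  · intro x y m k hmk
    have hLxy : L x = L y := by rw [← hLf m x, ← hLf k y, hmk]
    have hDxy : x ∈ D ↔ y ∈ D := by rw [← hDf m x, ← hDf k y, hmk]
    by_cases hx : x ∈ D
    · right
      refine ⟨0, fun i j hi hj => hinj ?_⟩
      rcases hi with hi | hi
      · rcases hj with hj | hj
        · rw [hi.2, hj.2, hLf, hLf, hLxy]
        · exact absurd ((hDf _ _).2 (hDxy.1 hx)) hj.1
      · exact absurd ((hDf _ _).2 hx) hi.1
    · left
      have hesc : ∀ z, z ∉ D → ∀ᶠ n in atTop, z ∉ S n := by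
        intro z hz
        by_cases hzL : h z = L z
        · refine Eventually.of_forall fun n hn => ?_
          rcases hn with hn | hn
          · exact hz hn.1
          · exact hn.2.1 hzL
        · have hpos : 0 < |h z - L z| := abs_pos.mpr (sub_ne_zero.mpr hzL)
          have := (tendsto_one_div_add_atTop_nhds_zero_nat (𝕜 := ℝ)).eventually_lt_const hpos
          refine this.mono fun n hn hS => ?_
          rcases hS with hS | hS
          · exact hz hS.1
          · exact lt_asymm hn hS.2.2
      have e1 : ∀ᶠ n in atTop, ∀ i ∈ Finset.range m, f^[i] x ∉ S n :=
        (Filter.eventually_all_finset _).2 fun i _ => hesc _ fun H => hx ((hDf i x).1 H)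
      have e2 : ∀ᶠ n in atTop, ∀ i ∈ Finset.range k, f^[i] y ∉ S n :=
        (Filter.eventually_all_finset _).2 fun i _ =>
          hesc _ fun H => hx (hDxy.2 ((hDf i y).1 H))
      obtain ⟨n, hn1, hn2⟩ := (e1.and e2).exists
      exact ⟨n, fun i hi => hn1 i (Finset.mem_range.2 hi), fun i hi => hn2 i (Finset.mem_range.2 hi)⟩

/-- Hyperfiniteness pulls back along injective Borel reductions. -/
lemma hyperfinite_pullback {X Y : Type*} [MeasurableSpace X] [MeasurableSpace Y]
    {E : X → X → Prop} {F : Y → Y → Prop} (f : X → Y) (hf : Measurable f)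
    (hinj : Function.Injective f) (hEF : ∀ x x', E x x' ↔ F (f x) (f x'))
    (hF : Hyperfinite F) : Hyperfinite E := by
  obtain ⟨R, hR, hR1, hR2⟩ := hF
  refine ⟨fun i x y => R i (f x) (f y), fun i => ⟨⟨?_, ?_, ?_⟩, ?_, ?_⟩, ?_, ?_⟩
  · exact fun x => (hR i).1.refl _
  · exact fun h => (hR i).1.symm h
  · exact fun h h' => (hR i).1.trans h h'
  · exact ((hf.comp measurable_fst).prodMk (hf.comp measurable_snd)) (hR i).2.1
  · exact fun x => ((hR i).2.2 (f x)).preimage hinj.injOn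
  · exact fun i x y h => hR1 i _ _ h
  · exact fun x y => (hEF x y).trans (hR2 _ _)

section GeoLemmas

variable {V : Type*} {T : SimpleGraph V}

lemma eqvGen_iterate_iff {X : Type*} (φ : X → X) (x y : X) :
    Relation.EqvGen (fun a b => ∃ m : ℕ, b = φ^[m] a) x y ↔ ∃ m n, φ^[m] x = φ^[n] y := by
  constructor
  · intro H
    induction H with
    | rel a b hab => obtain ⟨m, rfl⟩ := hab; exact ⟨m, 0, rfl⟩
    | refl a => exact ⟨0, 0, rfl⟩
    | symm a b _ ih => obtain ⟨m, n, e⟩ := ih; exact ⟨n, m, e.symm⟩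
    | trans a b c _ _ ih1 ih2 =>
      obtain ⟨m, n, e⟩ := ih1
      obtain ⟨m', n', e'⟩ := ih2
      refine ⟨m' + m, n + n', ?_⟩
      rw [Function.iterate_add_apply, e, ← Function.iterate_add_apply, add_comm m' n,
        Function.iterate_add_apply, e', ← Function.iterate_add_apply]
  · rintro ⟨m, n, e⟩
    refine Relation.EqvGen.trans _ (φ^[m] x) _ (Relation.EqvGen.rel _ _ ⟨m, rfl⟩) ?_
    rw [e]
    exact Relation.EqvGen.symm _ _ (Relation.EqvGen.rel _ _ ⟨n, rfl⟩)

lemma iterate_geoShift_apply (m : ℕ) (v : Geo T) (i : ℕ) :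
    ((geoShift T)^[m] v).1 i = v.1 (m + i) := by
  induction m generalizing v i with
  | zero => simp
  | succ m ih =>
    rw [Function.iterate_succ_apply, ih]
    change v.1 (m + i + 1) = _
    rw [show m + i + 1 = m + 1 + i by omega]

lemma tailRel_iff (v w : Geo T) :
    tailRel T v w ↔ ∃ m n, (geoShift T)^[m] v = (geoShift T)^[n] w :=
  eqvGen_iterate_iff _ _ _

variable {G : Type*} [Group G] [MulAction G V]

lemma geoRelGN_iff (hact : IsGraphAction T G) (v w : Geo T) :
    geoRelGN hact v w ↔
      ∃ m n, geoRel hact ((geoShift T)^[m] v) ((geoShift T)^[n] w) := by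
  have heq := (geoSetoidG hact).iseqv
  have hsh : ∀ (k : ℕ) a b, geoRel hact a b →
      geoRel hact ((geoShift T)^[k] a) ((geoShift T)^[k] b) := by
    rintro k a b ⟨g, rfl⟩
    exact ⟨g, (iterate_geoShift_geoSmul hact g k a).symm⟩
  constructor
  · intro H
    induction H with
    | rel a b hab =>
      obtain ⟨⟨g, m⟩, rfl⟩ := hab
      exact ⟨m, 0, g, rfl⟩
    | refl a => exact ⟨0, 0, heq.refl a⟩
    | symm a b _ ih => obtain ⟨m, n, e⟩ := ih; exact ⟨n, m, heq.symm e⟩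
    | trans a b c _ _ ih1 ih2 =>
      obtain ⟨m, n, e⟩ := ih1
      obtain ⟨m', n', e'⟩ := ih2
      refine ⟨m' + m, n + n', ?_⟩
      have e1 := hsh m' _ _ e
      have e2 := hsh n _ _ e'
      rw [← Function.iterate_add_apply, ← Function.iterate_add_apply] at e1 e2
      rw [add_comm n m'] at e2
      exact heq.trans e1 e2
  · rintro ⟨m, n, g, e⟩
    refine Relation.EqvGen.trans _ (geoSmul hact g ((geoShift T)^[m] v)) _
      (Relation.EqvGen.rel _ _ ⟨(g, m), rfl⟩) ?_
    rw [e]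
    exact Relation.EqvGen.symm _ _ (Relation.EqvGen.rel _ _ ⟨(1, n), (geoSmul_one hact _).symm⟩)

lemma bdryRel_mk_iff (hact : IsGraphAction T G) (v w : Geo T) :
    bdryRel hact (Quotient.mk (tailSetoid T) v) (Quotient.mk (tailSetoid T) w) ↔
      geoRelGN hact v w := by
  rw [geoRelGN_iff]
  have key : ∀ g : G, bdrySmul hact g (Quotient.mk (tailSetoid T) v) =
      Quotient.mk (tailSetoid T) w ↔ tailRel T (geoSmul hact g v) w := fun g =>
    Quotient.eq (r := tailSetoid T)
  unfold bdryRel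
  simp only [key, tailRel_iff, iterate_geoShift_geoSmul]
  constructor
  · rintro ⟨g, m, n, e⟩; exact ⟨m, n, g, e⟩
  · rintro ⟨m, n, g, e⟩; exact ⟨g, m, n, e⟩

lemma shiftQuotRel_mk_iff (hact : IsGraphAction T G) (v w : Geo T) :
    shiftQuotRel hact (Quotient.mk (geoSetoidG hact) v) (Quotient.mk (geoSetoidG hact) w) ↔
      geoRelGN hact v w := by
  rw [geoRelGN_iff]
  unfold shiftQuotRel
  rw [eqvGen_iterate_iff]
  have key : ∀ (m : ℕ) (v : Geo T), (shiftQuotG hact)^[m] (Quotient.mk (geoSetoidG hact) v) =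
      Quotient.mk (geoSetoidG hact) ((geoShift T)^[m] v) := by
    intro m
    induction m with
    | zero => intro v; rfl
    | succ m ih =>
      intro v
      rw [Function.iterate_succ_apply, Function.iterate_succ_apply, ← ih]
      rfl
  simp only [key]
  refine exists_congr fun m => exists_congr fun n => ?_
  exact Quotient.eq (r := geoSetoidG hact)

/-- A ray in a tree gives a path walk. -/
lemma exists_walk_of_geo (m : ℕ) (u : ℕ → V) (hadj : ∀ n, T.Adj (u n) (u (n + 1))) :
    ∃ p : T.Walk (u 0) (u m), p.length = m ∧ ∀ i ≤ m, p.getVert i = u i := by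
  induction m generalizing u with
  | zero => exact ⟨SimpleGraph.Walk.nil, rfl, fun i hi => by simp [Nat.le_zero.mp hi]⟩
  | succ m ih =>
    obtain ⟨p, hp, hp'⟩ := ih (fun n => u (n + 1)) (fun n => hadj (n + 1))
    refine ⟨SimpleGraph.Walk.cons (hadj 0) p, by simp [hp], fun i hi => ?_⟩
    cases i with
    | zero => simp
    | succ i => rw [SimpleGraph.Walk.getVert_cons_succ, hp' i (by omega)]

lemma geo_ext_of_tail (hT : T.IsTree) (u w : Geo T) (h0 : u.1 0 = w.1 0)
    (h : tailRel T u w) : u = w := by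
  obtain ⟨m, n, e⟩ := (tailRel_iff u w).1 h
  have e' : ∀ i, u.1 (m + i) = w.1 (n + i) := fun i => by
    rw [← iterate_geoShift_apply, ← iterate_geoShift_apply, e]
  obtain ⟨p, hp, hp'⟩ := exists_walk_of_geo m u.1 u.2.2
  obtain ⟨q, hq, hq'⟩ := exists_walk_of_geo n w.1 w.2.2
  have hpp : p.IsPath := (SimpleGraph.Walk.IsPath.getVert_injOn_iff p).1 (by
    intro i hi j hj hij
    simp only [Set.mem_ofPred_eq, hp] at hi hj
    rw [hp' i hi, hp' j hj] at hij
    exact u.2.1 hij)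
  have hqp : q.IsPath := (SimpleGraph.Walk.IsPath.getVert_injOn_iff q).1 (by
    intro i hi j hj hij
    simp only [Set.mem_ofPred_eq, hq] at hi hj
    rw [hq' i hi, hq' j hj] at hij
    exact w.2.1 hij)
  have he := e' 0
  simp only [add_zero] at he
  have hpq : p = q.copy h0.symm he.symm := by
    have := (hT.isAcyclic.subsingleton_path _ _).elim ⟨p, hpp⟩
      ⟨q.copy h0.symm he.symm, by simpa using hqp⟩
    exact congrArg Subtype.val this
  have hmn : m = n := by
    have := congrArg SimpleGraph.Walk.length hpq
    simpa [hp, hq] using this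
  subst hmn
  apply Subtype.ext
  funext i
  by_cases hi : i ≤ m
  · rw [← hp' i hi, ← hq' i hi, hpq]
    simp
  · have := e' (i - m)
    rwa [Nat.add_sub_cancel' (by omega)] at this

/-- Glue a finite word in front of a tail of a sequence. -/
def glue (q : List V × ℕ) (v : ℕ → V) : ℕ → V := fun i =>
  if h : i < q.1.length then q.1[i] else v (q.2 + (i - q.1.length))

lemma exists_glue (hT : T.IsTree) (o : V) (v : Geo T) :
    ∃ q : List V × ℕ, glue q v.1 ∈ Geo T ∧ glue q v.1 0 = o := by
  obtain ⟨n, hn⟩ : ∃ n, ∀ k, T.dist o (v.1 n) ≤ T.dist o (v.1 k) := by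
    exact ⟨_, fun k => Function.argmin_le (fun n => T.dist o (v.1 n)) k⟩
  obtain ⟨p, hp⟩ := hT.connected.exists_walk_length_eq_dist o (v.1 n)
  have hpp : p.IsPath := p.isPath_of_length_eq_dist hp
  have hglue : ∀ i, glue (p.support, n + 1) v.1 i =
      if i ≤ p.length then p.getVert i else v.1 (n + (i - p.length)) := by
    intro i
    unfold glue
    by_cases hi : i ≤ p.length
    · rw [dif_pos (by simp; omega), if_pos hi]
      simp [SimpleGraph.Walk.support_getElem_eq_getVert]
    · rw [dif_neg (by simp; omega), if_neg hi]
      rw [SimpleGraph.Walk.length_support]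
      exact congrArg v.1 (show n + 1 + (i - (p.length + 1)) = n + (i - p.length) by omega)
  have hnot : ∀ i < p.length, ∀ k, p.getVert i ≠ v.1 k := by
    intro i hi k hk
    have h1 : T.dist o (p.getVert i) ≤ i := by
      have := SimpleGraph.dist_le (p.take i)
      simpa [SimpleGraph.Walk.take_length, hi.le] using this
    have := hn k
    rw [← hk] at this
    omega
  refine ⟨(p.support, n + 1), ⟨?_, ?_⟩, ?_⟩
  · intro i j hij
    rw [hglue, hglue] at hij
    split_ifs at hij with h1 h2 h2
    · exact hpp.getVert_injOn h1 h2 hij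
    · rcases h1.lt_or_eq with h1 | rfl
      · exact absurd hij (hnot i h1 _)
      · rw [SimpleGraph.Walk.getVert_length] at hij
        have := v.2.1 hij
        omega
    · rcases h2.lt_or_eq with h2 | rfl
      · exact absurd hij.symm (hnot j h2 _)
      · rw [SimpleGraph.Walk.getVert_length] at hij
        have := v.2.1 hij
        omega
    · have := v.2.1 hij
      omega
  · intro i
    rw [hglue, hglue]
    rcases lt_trichotomy i p.length with h | h | h
    · rw [if_pos h.le, if_pos (by omega)]
      exact p.adj_getVert_succ h
    · subst h
      rw [if_pos le_rfl, if_neg (by omega), SimpleGraph.Walk.getVert_length]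
      simpa using v.2.2 n
    · rw [if_neg (by omega), if_neg (by omega)]
      have := v.2.2 (n + (i - p.length))
      rwa [show n + (i - p.length) + 1 = n + (i + 1 - p.length) by omega] at this
  · rw [hglue, if_pos (Nat.zero_le _), SimpleGraph.Walk.getVert_zero]

variable [Countable V] [MeasurableSpace V] [DiscreteMeasurableSpace V]

lemma measurableSet_Geo (T : SimpleGraph V) : MeasurableSet (Geo T) := by
  have : Geo T = (⋂ i : ℕ, ⋂ j : ℕ, ⋂ _ : i ≠ j, {v : ℕ → V | v i ≠ v j}) ∩
      ⋂ n : ℕ, (fun v : ℕ → V => (v n, v (n + 1))) ⁻¹' {q | T.Adj q.1 q.2} := by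
    ext v
    simp only [Geo, Set.mem_ofPred_eq, Set.mem_inter_iff, Set.mem_iInter, Set.mem_preimage]
    refine and_congr ⟨fun h i j hij e => hij (h e), fun h i j e => ?_⟩ Iff.rfl
    by_contra hij
    exact h i j hij e
  rw [this]
  refine MeasurableSet.inter ?_ ?_
  · refine MeasurableSet.iInter fun i => MeasurableSet.iInter fun j =>
      MeasurableSet.iInter fun _ => ?_
    exact ((measurable_pi_apply (X := fun _ : ℕ => V) i).prodMk
      (measurable_pi_apply (X := fun _ : ℕ => V) j))
      (MeasurableSet.of_discrete (s := {q : V × V | q.1 ≠ q.2}))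
  · exact MeasurableSet.iInter fun n =>
      ((measurable_pi_apply n).prodMk (measurable_pi_apply (n + 1))) MeasurableSet.of_discrete

lemma measurable_glue (q : List V × ℕ) : Measurable (glue q) := by
  refine measurable_pi_lambda _ fun i => ?_
  unfold glue
  by_cases h : i < q.1.length
  · simp only [h, dif_pos]; exact measurable_const
  · simp only [h, dif_neg, not_false_eq_true]; exact measurable_pi_apply _

/-- The Borel selector for tail equivalence. -/
lemma exists_rho (hT : T.IsTree) : ∃ ρ : Geo T → Geo T, Measurable ρ ∧
    (∀ v, tailRel T v (ρ v)) ∧ ∀ v w, tailRel T v w → ρ v = ρ w := by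
  classical
  obtain ⟨o⟩ := hT.connected.nonempty
  obtain ⟨e, he⟩ := exists_surjective_nat (List V × ℕ)
  have hex : ∀ v : Geo T, ∃ k, glue (e k) v.1 ∈ Geo T ∧ glue (e k) v.1 0 = o := by
    intro v
    obtain ⟨q, hq⟩ := exists_glue hT o v
    obtain ⟨k, rfl⟩ := he q
    exact ⟨k, hq⟩
  have hgm : ∀ k, Measurable fun v : Geo T => glue (e k) v.1 := fun k =>
    (measurable_glue (e k)).comp measurable_subtype_coe
  have hm : Measurable fun v : Geo T => glue (e (Nat.find (hex v))) v.1 := by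
    refine Measurable.find (f := fun k (v : Geo T) => glue (e k) v.1) hgm (fun k => ?_) hex
    exact ((hgm k) (measurableSet_Geo T)).inter
      (((measurable_pi_apply 0).comp (hgm k)) (MeasurableSet.of_discrete (s := {o})))
  let ρ : Geo T → Geo T := fun v => ⟨glue (e (Nat.find (hex v))) v.1, (Nat.find_spec (hex v)).1⟩
  have h0 : ∀ v, (ρ v).1 0 = o := fun v => (Nat.find_spec (hex v)).2
  have ht : ∀ v, tailRel T v (ρ v) := by
    intro v
    rw [tailRel_iff]
    refine ⟨(e (Nat.find (hex v))).2, (e (Nat.find (hex v))).1.length, ?_⟩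
    apply Subtype.ext
    funext i
    rw [iterate_geoShift_apply, iterate_geoShift_apply]
    simp [ρ, glue]
  refine ⟨ρ, hm.subtype_mk, ht, fun v w hvw => geo_ext_of_tail hT _ _ ?_ ?_⟩
  · rw [h0, h0]
  · exact ((ht v).symm.trans _ _ _ hvw).trans _ _ _ (ht w)

lemma measurable_geoShift : Measurable (geoShift T) := by
  refine Measurable.subtype_mk (measurable_pi_lambda _ fun i => ?_)
  exact (measurable_pi_apply (i + 1)).comp measurable_subtype_coe

lemma measurable_geoSmul (hact : IsGraphAction T G) (g : G) : Measurable (geoSmul hact g) := by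
  refine Measurable.subtype_mk (measurable_pi_lambda _ fun i => ?_)
  exact (Measurable.of_discrete (f := fun x : V => g • x)).comp
    ((measurable_pi_apply i).comp measurable_subtype_coe)

/-- The Borel selector for the `G`-action. -/
lemma exists_selector [Countable G] (hact : IsGraphAction T G) (hs : SmoothRel (geoRel hact)) :
    ∃ r : Geo T → Geo T, Measurable r ∧ (∀ v, geoRel hact v (r v)) ∧
      ∀ v w, geoRel hact v w → r v = r w := by
  classical
  obtain ⟨B, hB, hBt⟩ := hs
  obtain ⟨e, he⟩ := exists_surjective_nat G
  have hex : ∀ v : Geo T, ∃ k, geoSmul hact (e k) v ∈ B := by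
    intro v
    obtain ⟨y, ⟨hy, g, rfl⟩, -⟩ := hBt v
    obtain ⟨k, rfl⟩ := he g
    exact ⟨k, hy⟩
  refine ⟨fun v => geoSmul hact (e (Nat.find (hex v))) v, ?_, fun v => ⟨_, rfl⟩, ?_⟩
  · exact Measurable.find (f := fun k v => geoSmul hact (e k) v)
      (fun k => measurable_geoSmul hact _)
      (fun k => measurable_geoSmul hact _ hB) hex
  · intro v w hvw
    exact (hBt v).unique ⟨Nat.find_spec (hex v), ⟨_, rfl⟩⟩
      ⟨Nat.find_spec (hex w), (geoSetoidG hact).iseqv.trans hvw ⟨_, rfl⟩⟩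

lemma hyperfinite_geoRelGN [Countable G] (hact : IsGraphAction T G)
    (hs : SmoothRel (geoRel hact)) : Hyperfinite (geoRelGN hact) := by
  classical
  have heq := (geoSetoidG hact).iseqv
  obtain ⟨r, hr, hr1, hr2⟩ := exists_selector hact hs
  have hrr : ∀ v w, r v = r w ↔ geoRel hact v w := fun v w =>
    ⟨fun h => heq.trans (hr1 v) (h ▸ heq.symm (hr1 w)), hr2 v w⟩
  -- a bounded real embedding
  have : StandardBorelSpace (Geo T) := (measurableSet_Geo T).standardBorel
  have hemb := measurableEmbedding_embeddingReal (Geo T)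
  obtain ⟨h, hh, hinj, h0, h1⟩ : ∃ h : Geo T → ℝ, Measurable h ∧ Function.Injective h ∧
      (∀ x, 0 ≤ h x) ∧ ∀ x, h x ≤ 1 := by
    refine ⟨fun x => Real.sigmoid (embeddingReal (Geo T) x), ?_, ?_, ?_, ?_⟩
    · exact continuous_sigmoid.measurable.comp hemb.measurable
    · exact Real.sigmoid_injective.comp hemb.injective
    · exact fun x => Real.sigmoid_nonneg _
    · exact fun x => Real.sigmoid_le_one _
  let f : Geo T → Geo T := fun v => r (geoShift T v)
  have hf : Measurable f := hr.comp measurable_geoShift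
  obtain ⟨e, he⟩ := exists_surjective_nat G
  obtain ⟨c, hc⟩ := exists_injective_nat V
  have hex : ∀ v : Geo T, ∃ k, h (geoShift T v) = h (geoSmul hact (e k) (f v)) := by
    intro v
    obtain ⟨g, hg⟩ := heq.symm (hr1 (geoShift T v))
    obtain ⟨k, rfl⟩ := he g
    exact ⟨k, congrArg h hg.symm⟩
  let N : Geo T → ℕ := fun v => Nat.pair (Nat.find (hex v)) (c (v.1 0))
  have hN : Measurable N := by
    refine Measurable.find (f := fun k (v : Geo T) => Nat.pair k (c (v.1 0))) (fun k => ?_)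
      (fun k => measurableSet_eq_fun (hh.comp measurable_geoShift)
        (hh.comp ((measurable_geoSmul hact _).comp hf))) hex
    exact (Measurable.of_discrete (f := fun x : V => Nat.pair k (c x))).comp
      ((measurable_pi_apply 0).comp measurable_subtype_coe)
  have hfN : ∀ x y, f x = f y → N x = N y → x = y := by
    intro x y h1 h2
    simp only [N, Nat.pair_eq_pair] at h2
    obtain ⟨h2, h3⟩ := h2
    have ex := hinj (Nat.find_spec (hex x))
    have ey := hinj (Nat.find_spec (hex y))
    rw [h2, h1, ← ey] at ex
    apply Subtype.ext
    funext i
    cases i with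
    | zero => exact hc h3
    | succ i => exact congrFun (congrArg Subtype.val ex) i
  have hmain := hyperfinite_tail h hh hinj h0 h1 f hf N hN hfN
  have hfk : ∀ k v, f^[k + 1] v = r ((geoShift T)^[k + 1] v) := by
    intro k
    induction k with
    | zero => intro v; rfl
    | succ k ih =>
      intro v
      rw [Function.iterate_succ_apply', ih]
      apply hr2
      obtain ⟨g, hg⟩ := heq.symm (hr1 ((geoShift T)^[k + 1] v))
      exact ⟨g, by rw [← geoShift_geoSmul, hg, Function.iterate_succ_apply' _ (k + 1)]⟩
  have hE : geoRelGN hact = fun x y => ∃ m n, f^[m] x = f^[n] y := by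
    funext x y
    apply propext
    rw [geoRelGN_iff]
    constructor
    · rintro ⟨m, n, g, hg⟩
      refine ⟨m + 1, n + 1, ?_⟩
      rw [hfk, hfk]
      apply hr2
      refine ⟨g, ?_⟩
      rw [Function.iterate_succ_apply', Function.iterate_succ_apply', ← hg, geoShift_geoSmul]
    · rintro ⟨m, n, hmn⟩
      refine ⟨m + 1, n + 1, (hrr _ _).1 ?_⟩
      rw [← hfk, ← hfk, Function.iterate_succ_apply', Function.iterate_succ_apply', hmn]
  rw [hE]
  exact hmain

end GeoLemmas

theorem boundary_hyperfinite_of_smooth_geo_action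
    {V : Type*} [Countable V] [MeasurableSpace V] [DiscreteMeasurableSpace V]
    (T : SimpleGraph V) (hT : T.IsTree)
    {G : Type*} [Group G] [Countable G] [MulAction G V]
    (hact : IsGraphAction T G)
    (hsmooth : SmoothRel (geoRel hact)) :
    BorelBireducible (bdryRel hact) (geoRelGN hact) ∧
    BorelBireducible (geoRelGN hact) (shiftQuotRel hact) ∧
    Hyperfinite (shiftQuotRel hact) ∧
    Hyperfinite (bdryRel hact) := by
  classical
  obtain ⟨ρ, hρ, hρ1, hρ2⟩ := exists_rho hT
  obtain ⟨r, hr, hr1, hr2⟩ := exists_selector hact hsmooth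
  have hGN := hyperfinite_geoRelGN hact hsmooth
  let σ : GeoQuotG hact → Geo T := Quotient.lift r hr2
  have hσ : Measurable σ := measurable_from_quotient.2 hr
  have hσr : ∀ x, Quotient.mk (geoSetoidG hact) (σ x) = x := by
    intro x
    induction x using Quotient.inductionOn with
    | h v => exact Quotient.sound ((geoSetoidG hact).iseqv.symm (hr1 v))
  have hσE : ∀ x y, shiftQuotRel hact x y ↔ geoRelGN hact (σ x) (σ y) := by
    intro x y
    rw [← shiftQuotRel_mk_iff, hσr, hσr]
  let τ : Bdry T → Geo T := Quotient.lift ρ hρ2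
  have hτ : Measurable τ := measurable_from_quotient.2 hρ
  have hτr : ∀ x : Bdry T, Quotient.mk (tailSetoid T) (τ x) = x := by
    intro x
    induction x using Quotient.inductionOn with
    | h v => exact Quotient.sound ((tailSetoid T).iseqv.symm (hρ1 v))
  have hτE : ∀ x y, bdryRel hact x y ↔ geoRelGN hact (τ x) (τ y) := by
    intro x y
    have := bdryRel_mk_iff hact (τ x) (τ y)
    rwa [hτr, hτr] at this
  refine ⟨⟨⟨τ, hτ, hτE⟩, ⟨fun v => Quotient.mk (tailSetoid T) v, ?_, fun x y =>
    (bdryRel_mk_iff hact x y).symm⟩⟩, ⟨⟨fun v => Quotient.mk (geoSetoidG hact) v, ?_, fun x y =>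
    (shiftQuotRel_mk_iff hact x y).symm⟩, ⟨σ, hσ, hσE⟩⟩, ?_, ?_⟩
  · exact measurable_quotient_mk'' (s := tailSetoid T)
  · exact measurable_quotient_mk'' (s := geoSetoidG hact)
  · exact hyperfinite_pullback σ hσ (Function.LeftInverse.injective hσr) hσE hGN
  · exact hyperfinite_pullback τ hτ (Function.LeftInverse.injective hτr) hτE hGN
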